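/- Let r ∈ ℝ, T > 0, p > 4, R > 0, N ≥ 1, and let σ : [0,∞)×ℝ → ℝ be measurable with |σ(x,u)| ≤ R(e^{rx}+|u|) for all x ≥ 0, u ∈ ℝ. Then there exists a constant C = C(r,p,T) > 0 such that for every measurable ġ : [0,T]×[0,∞) → ℝ with ∫_0^T ∫_0^∞ ġ(s,y)² dy ds ≤ N² and every continuous u : [0,T]×[0,∞) → ℝ with ‖u‖_{C_r^T} < ∞, ( sup_{t∈[0,T]} sup_{x≥0} e^{−rx} | ∫_0^t ∫_0^∞ G(t−s,x,y) σ(y,u(s,y)) ġ(s,y) dy ds | )^p ≤ C R^p N^p T^{(p−4)/4} ∫_0^T ( 1 + ‖u‖_{C_r^t} )^p dt. -/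

import Mathlib

/-!
The growth bound on `σ` turns the weight `e^{-rx}` into the kernel weight `e^{-r(x-y)}`, so the
weighted integrand is at most `|G_r(t-s,x,y)| · R (1 + ‖u‖_{C_r^s}) · |ġ(s,y)|`. On the half-line
`G` is dominated by the Gaussian, and completing the square gives
`∫₀^∞ G_r(τ,x,y)² dy ≤ e^{2r²τ} (8πτ)^{-1/2}`. Cauchy–Schwarz in `(s,y)` splits off `ġ`,
and Hölder in `s` with exponents `p/(p-2)` and `p/2` separates the kernel from `‖u‖_{C_r^s}`. What
remains of the kernel is `∫₀ᵗ (t-s)^{-p/(2(p-2))} ds`, which converges exactly because `p > 4` and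
whose power `(p-2)/2` produces the factor `T^{(p-4)/4}`.
-/

open MeasureTheory Real Set Filter

/-- Dirichlet heat kernel on `[0,∞)`. -/
noncomputable def G (t x y : ℝ) : ℝ :=
  (Real.sqrt (4 * Real.pi * t))⁻¹ *
    (Real.exp (-(x - y) ^ 2 / (4 * t)) - Real.exp (-(x + y) ^ 2 / (4 * t)))

/-- Exponentially weighted kernel `G_r(t,x,y) = e^{-r(x-y)} G(t,x,y)`. -/
noncomputable def Gr (r t x y : ℝ) : ℝ := Real.exp (-r * (x - y)) * G t x y

/-- Weighted sup norm `‖v‖_{L_r} = sup_{x ≥ 0} e^{-rx}|v(x)|`. -/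
noncomputable def LrNorm (r : ℝ) (v : ℝ → ℝ) : ℝ :=
  sSup ((fun x => Real.exp (-r * x) * |v x|) '' Ici 0)

/-- Weighted sup norm `‖u‖_{C_r^T} = sup_{t ∈ [0,T]} sup_{x ≥ 0} e^{-rx}|u(t,x)|`. -/
noncomputable def CrNorm (r T : ℝ) (u : ℝ → ℝ → ℝ) : ℝ :=
  sSup ((fun q : ℝ × ℝ => Real.exp (-r * q.2) * |u q.1 q.2|) '' (Icc 0 T ×ˢ Ici 0))

/-- `‖u‖_{C_r^T} < ∞`, expressed as boundedness of the weighted values. -/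
def CrBdd (r T : ℝ) (u : ℝ → ℝ → ℝ) : Prop :=
  BddAbove ((fun q : ℝ × ℝ => Real.exp (-r * q.2) * |u q.1 q.2|) '' (Icc 0 T ×ˢ Ici 0))

open scoped ENNReal

/-! ### Hölder's inequality -/

section Holder

variable {α β : Type*} [MeasurableSpace α] [MeasurableSpace β] {μ : Measure α} {ν : Measure β}

theorem sq_lintegral_mul_le {f g : α → ℝ≥0∞} (hf : AEMeasurable f μ) (hg : AEMeasurable g μ) :
    (∫⁻ a, f a * g a ∂μ) ^ 2 ≤ (∫⁻ a, f a ^ 2 ∂μ) * ∫⁻ a, g a ^ 2 ∂μ := by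
  have holder := ENNReal.lintegral_mul_le_Lp_mul_Lq μ Real.HolderConjugate.two_two hf hg
  have hsq := pow_le_pow_left' holder 2
  simpa only [mul_pow, ← ENNReal.rpow_two, ← ENNReal.rpow_mul, Pi.mul_apply,
    one_div_mul_cancel (two_ne_zero' ℝ), ENNReal.rpow_one] using hsq

theorem rpow_lintegral_mul_sq_le {p : ℝ} (hp : 2 < p) {A b : α → ℝ≥0∞} (hA : AEMeasurable A μ)
    (hb : AEMeasurable b μ) :
    (∫⁻ s, A s * b s ^ 2 ∂μ) ^ (p / 2) ≤
      (∫⁻ s, A s ^ (p / (p - 2)) ∂μ) ^ ((p - 2) / 2) * ∫⁻ s, b s ^ p ∂μ := by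
  have hp2 : 0 < p - 2 := by linarith
  have hpq : (p / (p - 2)).HolderConjugate (p / 2) := by
    rw [Real.holderConjugate_iff, lt_div_iff₀ hp2]
    constructor
    · linarith
    · field_simp
      ring
  have holder := ENNReal.rpow_le_rpow
    (ENNReal.lintegral_mul_le_Lp_mul_Lq μ hpq hA (hb.pow_const 2)) (by linarith : 0 ≤ p / 2)
  rw [ENNReal.mul_rpow_of_nonneg _ _ (by linarith)] at holder
  simp only [Pi.mul_apply, ← ENNReal.rpow_two, ← ENNReal.rpow_mul] at holder ⊢
  convert holder using 2
  · congr 1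
    field_simp
  · rw [one_div_mul_cancel (by linarith), ENNReal.rpow_one, mul_div_cancel₀ p two_ne_zero]

theorem rpow_lintegral_prod_mul_le [SFinite ν] {p : ℝ} (hp : 2 < p)
    {k γ : α × β → ℝ≥0∞} {b : α → ℝ≥0∞} (hk : AEMeasurable k (μ.prod ν))
    (hb : AEMeasurable b μ) (hγ : AEMeasurable γ (μ.prod ν)) :
    (∫⁻ z, k z * b z.1 * γ z ∂μ.prod ν) ^ p ≤
      (∫⁻ s, (∫⁻ y, k (s, y) ^ 2 ∂ν) ^ (p / (p - 2)) ∂μ) ^ ((p - 2) / 2) * (∫⁻ s, b s ^ p ∂μ) *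
        (∫⁻ z, γ z ^ 2 ∂μ.prod ν) ^ (p / 2) := by
  have hkb : AEMeasurable (fun z : α × β => k z * b z.1) (μ.prod ν) := hk.mul hb.comp_fst
  have tonelli : ∫⁻ z, (k z * b z.1) ^ 2 ∂μ.prod ν =
      ∫⁻ s, (∫⁻ y, k (s, y) ^ 2 ∂ν) * b s ^ 2 ∂μ := by
    rw [lintegral_prod _ (hkb.pow_const 2)]
    refine lintegral_congr_ae ?_
    filter_upwards [hk.aestronglyMeasurable.prodMk_left] with s hs
    simp only [mul_pow]
    exact lintegral_mul_const'' _ (hs.aemeasurable.pow_const 2)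
  calc (∫⁻ z, k z * b z.1 * γ z ∂μ.prod ν) ^ p
      = ((∫⁻ z, k z * b z.1 * γ z ∂μ.prod ν) ^ 2) ^ (p / 2) := by
        rw [← ENNReal.rpow_two, ← ENNReal.rpow_mul, mul_div_cancel₀ p two_ne_zero]
    _ ≤ ((∫⁻ z, (k z * b z.1) ^ 2 ∂μ.prod ν) * ∫⁻ z, γ z ^ 2 ∂μ.prod ν) ^ (p / 2) :=
        ENNReal.rpow_le_rpow (sq_lintegral_mul_le hkb hγ) (by linarith)
    _ = (∫⁻ s, (∫⁻ y, k (s, y) ^ 2 ∂ν) * b s ^ 2 ∂μ) ^ (p / 2) *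
          (∫⁻ z, γ z ^ 2 ∂μ.prod ν) ^ (p / 2) := by
        rw [ENNReal.mul_rpow_of_nonneg _ _ (by linarith), tonelli]
    _ ≤ _ := by
        gcongr
        exact rpow_lintegral_mul_sq_le hp (hk.pow_const 2).lintegral_prod_right' hb

theorem lintegral_enorm_sq_eq {f : α → ℝ} (hf : Integrable (fun a => f a ^ 2) μ) :
    ∫⁻ a, ‖f a‖ₑ ^ 2 ∂μ = ENNReal.ofReal (∫ a, f a ^ 2 ∂μ) := by
  rw [ofReal_integral_eq_lintegral_ofReal hf (Eventually.of_forall fun a => sq_nonneg (f a))]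
  simp only [← enorm_pow, Real.enorm_of_nonneg (sq_nonneg _)]

theorem rpow_lintegral_enorm_sq_le {f : α → ℝ} {p N : ℝ} (hp : 0 ≤ p) (hN : 0 ≤ N)
    (hf : Integrable (fun a => f a ^ 2) μ) (hfN : ∫ a, f a ^ 2 ∂μ ≤ N ^ 2) :
    (∫⁻ a, ‖f a‖ₑ ^ 2 ∂μ) ^ (p / 2) ≤ ENNReal.ofReal (N ^ p) := by
  calc (∫⁻ a, ‖f a‖ₑ ^ 2 ∂μ) ^ (p / 2) ≤ ENNReal.ofReal (N ^ 2) ^ (p / 2) := by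
        rw [lintegral_enorm_sq_eq hf]
        gcongr
    _ = ENNReal.ofReal (N ^ p) := by
        rw [ENNReal.ofReal_rpow_of_nonneg (by positivity) (by positivity), ← rpow_two,
          ← rpow_mul hN, mul_div_cancel₀ p two_ne_zero]

end Holder

/-! ### The heat kernel -/

/-- On the half-line the image term only decreases the kernel. -/
theorem abs_G_le {τ x y : ℝ} (hτ : 0 ≤ τ) (hx : 0 ≤ x) (hy : 0 ≤ y) :
    |G τ x y| ≤ (√(4 * π * τ))⁻¹ * exp (-(x - y) ^ 2 / (4 * τ)) := by
  have image_le : exp (-(x + y) ^ 2 / (4 * τ)) ≤ exp (-(x - y) ^ 2 / (4 * τ)) := by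
    rw [exp_le_exp]
    gcongr ?_ / _
    nlinarith [mul_nonneg hx hy]
  rw [G, abs_mul, abs_of_nonneg (by positivity), abs_of_nonneg (sub_nonneg.2 image_le)]
  gcongr
  exact sub_le_self _ (exp_pos _).le

/-- Completing the square recentres the weighted Gaussian at `y = x + 2rτ`. -/
theorem sq_Gr_le {r τ x y : ℝ} (hτ : 0 < τ) (hx : 0 ≤ x) (hy : 0 ≤ y) :
    Gr r τ x y ^ 2 ≤
      (4 * π * τ)⁻¹ * exp (2 * r ^ 2 * τ) * exp (-(2 * τ)⁻¹ * (x + 2 * r * τ - y) ^ 2) := by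
  have exponent_eq : 2 * (-r * (x - y)) + 2 * (-(x - y) ^ 2 / (4 * τ)) =
      2 * r ^ 2 * τ + -(2 * τ)⁻¹ * (x + 2 * r * τ - y) ^ 2 := by
    field_simp
    ring
  calc Gr r τ x y ^ 2 = exp (-r * (x - y)) ^ 2 * |G τ x y| ^ 2 := by rw [Gr, mul_pow, sq_abs]
    _ ≤ exp (-r * (x - y)) ^ 2 * ((√(4 * π * τ))⁻¹ * exp (-(x - y) ^ 2 / (4 * τ))) ^ 2 := by
        gcongr
        exact abs_G_le hτ.le hx hy
    _ = (4 * π * τ)⁻¹ * exp (2 * (-r * (x - y)) + 2 * (-(x - y) ^ 2 / (4 * τ))) := by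
        rw [mul_pow, inv_pow, sq_sqrt (by positivity), ← exp_nat_mul, ← exp_nat_mul, exp_add]
        push_cast
        ring
    _ = _ := by rw [exponent_eq, exp_add, ← mul_assoc]

theorem integral_exp_neg_mul_sub_sq (b c : ℝ) :
    ∫ y : ℝ, exp (-b * (c - y) ^ 2) = √(π / b) := by
  rw [integral_sub_left_eq_self (fun z => exp (-b * z ^ 2)) volume c, integral_gaussian]

/-- At `τ = 0` both sides vanish, by the conventions `0⁻¹ = 0` and `0 ^ (-1/2) = 0`. -/
theorem lintegral_Gr_sq_le {r τ x : ℝ} (hτ : 0 ≤ τ) (hx : 0 ≤ x) :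
    ∫⁻ y in Ioi (0 : ℝ), ‖Gr r τ x y‖ₑ ^ 2 ≤
      ENNReal.ofReal (exp (2 * r ^ 2 * τ) / √(8 * π) * τ ^ (-(1 / 2) : ℝ)) := by
  rcases hτ.eq_or_lt with rfl | hτ
  · simp [Gr, G]
  set gaussian : ℝ → ℝ := fun y =>
    (4 * π * τ)⁻¹ * exp (2 * r ^ 2 * τ) * exp (-(2 * τ)⁻¹ * (x + 2 * r * τ - y) ^ 2)
  have integrable_gaussian : Integrable gaussian :=
    ((integrable_exp_neg_mul_sq (by positivity)).comp_sub_left _).const_mul _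
  have integral_gaussian_eq :
      ∫ y, gaussian y = exp (2 * r ^ 2 * τ) / √(8 * π) * τ ^ (-(1 / 2) : ℝ) := by
    have sqrt_mul_sqrt : √(π * (2 * τ)) * (√(8 * π) * √τ) = 4 * π * τ := by
      rw [← sqrt_mul (by positivity), ← sqrt_mul (by positivity),
        show π * (2 * τ) * (8 * π * τ) = (4 * π * τ) ^ 2 by ring, sqrt_sq (by positivity)]
    rw [integral_const_mul, integral_exp_neg_mul_sub_sq, div_inv_eq_mul, rpow_neg hτ.le,
      ← sqrt_eq_rpow, ← sqrt_mul_sqrt]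
    field_simp
  calc ∫⁻ y in Ioi (0 : ℝ), ‖Gr r τ x y‖ₑ ^ 2
      ≤ ∫⁻ y in Ioi (0 : ℝ), ENNReal.ofReal (gaussian y) := by
        refine setLIntegral_mono' measurableSet_Ioi fun y hy => ?_
        rw [← enorm_pow, Real.enorm_of_nonneg (sq_nonneg _)]
        exact ENNReal.ofReal_le_ofReal (sq_Gr_le hτ hx (le_of_lt hy))
    _ ≤ ∫⁻ y, ENNReal.ofReal (gaussian y) := setLIntegral_le_lintegral _ _
    _ = ENNReal.ofReal (∫ y, gaussian y) :=
        (ofReal_integral_eq_lintegral_ofReal integrable_gaussian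
          (Eventually.of_forall fun y => by positivity)).symm
    _ = _ := by rw [integral_gaussian_eq]

theorem measurable_Gr (r x : ℝ) : Measurable fun q : ℝ × ℝ => Gr r q.1 x q.2 := by
  unfold Gr G
  fun_prop

theorem lintegral_Ioc_sub_left_rpow {a t : ℝ} (ha : -1 < a) (ht : 0 ≤ t) :
    ∫⁻ s in Ioc 0 t, ENNReal.ofReal ((t - s) ^ a) = ENNReal.ofReal (t ^ (a + 1) / (a + 1)) := by
  have hint : IntegrableOn (fun s => (t - s) ^ a) (Ioc 0 t) := by
    have h := (intervalIntegral.intervalIntegrable_rpow' (a := 0) (b := t) ha).comp_sub_left t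
    rw [sub_zero, sub_self] at h
    exact (intervalIntegrable_iff_integrableOn_Ioc_of_le ht).1 h.symm
  have hnonneg : 0 ≤ᵐ[volume.restrict (Ioc 0 t)] fun s => (t - s) ^ a := by
    filter_upwards [ae_restrict_mem measurableSet_Ioc] with s hs
    exact rpow_nonneg (sub_nonneg.2 hs.2) a
  rw [← ofReal_integral_eq_lintegral_ofReal hint hnonneg, ← intervalIntegral.integral_of_le ht,
    intervalIntegral.integral_comp_sub_left (fun τ => τ ^ a), sub_self, sub_zero,
    integral_rpow (Or.inl ha), zero_rpow (by linarith), sub_zero]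

theorem rpow_lintegral_Gr_sq_le {r T τ x q : ℝ} (hτ : 0 ≤ τ) (hτT : τ ≤ T) (hx : 0 ≤ x)
    (hq : 0 ≤ q) :
    (∫⁻ y in Ioi (0 : ℝ), ‖Gr r τ x y‖ₑ ^ 2) ^ q ≤
      ENNReal.ofReal ((exp (2 * r ^ 2 * T) / √(8 * π)) ^ q) * ENNReal.ofReal (τ ^ (-q / 2)) := by
  calc (∫⁻ y in Ioi (0 : ℝ), ‖Gr r τ x y‖ₑ ^ 2) ^ q
      ≤ ENNReal.ofReal (exp (2 * r ^ 2 * T) / √(8 * π) * τ ^ (-(1 / 2) : ℝ)) ^ q := by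
        refine ENNReal.rpow_le_rpow ((lintegral_Gr_sq_le hτ hx).trans ?_) hq
        gcongr
    _ = _ := by
        rw [ENNReal.ofReal_rpow_of_nonneg (by positivity) hq,
          mul_rpow (by positivity) (by positivity), ← rpow_mul hτ,
          ENNReal.ofReal_mul (by positivity), show -(1 / 2) * q = -q / 2 by ring]

theorem lintegral_rpow_lintegral_Gr_sq_le {r T t x q : ℝ} (ht : t ∈ Icc 0 T) (hx : 0 ≤ x)
    (hq : 0 ≤ q) (hq2 : q < 2) :
    ∫⁻ s in Ioc 0 t, (∫⁻ y in Ioi (0 : ℝ), ‖Gr r (t - s) x y‖ₑ ^ 2) ^ q ≤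
      ENNReal.ofReal ((exp (2 * r ^ 2 * T) / √(8 * π)) ^ q *
        (T ^ (-q / 2 + 1) / (-q / 2 + 1))) := by
  have exponent_pos : 0 < -q / 2 + 1 := by linarith
  calc _ ≤ ∫⁻ s in Ioc 0 t, ENNReal.ofReal ((exp (2 * r ^ 2 * T) / √(8 * π)) ^ q) *
          ENNReal.ofReal ((t - s) ^ (-q / 2)) :=
        setLIntegral_mono' measurableSet_Ioc fun s hs =>
          rpow_lintegral_Gr_sq_le (sub_nonneg.2 hs.2) (by linarith [hs.1, ht.2]) hx hq
    _ = ENNReal.ofReal ((exp (2 * r ^ 2 * T) / √(8 * π)) ^ q *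
          (t ^ (-q / 2 + 1) / (-q / 2 + 1))) := by
        rw [lintegral_const_mul' _ _ ENNReal.ofReal_ne_top,
          lintegral_Ioc_sub_left_rpow (by linarith) ht.1, ← ENNReal.ofReal_mul (by positivity)]
    _ ≤ _ := by
        obtain ⟨ht0, htT⟩ := ht
        gcongr

/-- The constant `C(r,p,T)` of the growth estimate. The first factor is the power `p/2` of the
coefficient of `τ^{-1/2}` in the bound for `∫₀^∞ G_r(τ,x,y)² dy`, and the second comes from
`∫₀ᵀ τ^{-p/(2(p-2))} dτ`. -/
noncomputable def growthConst (r T p : ℝ) : ℝ :=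
  (exp (2 * r ^ 2 * T) / √(8 * π)) ^ (p / 2) * (2 * (p - 2) / (p - 4)) ^ ((p - 2) / 2)

theorem growthConst_pos (r T : ℝ) {p : ℝ} (hp : 4 < p) : 0 < growthConst r T p := by
  have : 0 < p - 4 := by linarith
  have : 0 < p - 2 := by linarith
  unfold growthConst
  positivity

theorem rpow_lintegral_rpow_lintegral_Gr_sq_le {r T p t x : ℝ} (hp : 4 < p)
    (ht : t ∈ Icc 0 T) (hx : 0 ≤ x) :
    (∫⁻ s in Ioc 0 t, (∫⁻ y in Ioi (0 : ℝ), ‖Gr r (t - s) x y‖ₑ ^ 2) ^ (p / (p - 2))) ^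
      ((p - 2) / 2) ≤ ENNReal.ofReal (growthConst r T p * T ^ ((p - 4) / 4)) := by
  have hp2 : 0 < p - 2 := by linarith
  have hp4 : 0 < p - 4 := by linarith
  have hT : 0 ≤ T := ht.1.trans ht.2
  -- This is where `4 < p` enters.
  have hq2 : p / (p - 2) < 2 := by rw [div_lt_iff₀ hp2]; linarith
  have exponent_eq : -(p / (p - 2)) / 2 + 1 = (p - 4) / (2 * (p - 2)) := by
    field_simp
    ring
  have K_exponent_eq : p / (p - 2) * ((p - 2) / 2) = p / 2 := by field_simp
  have T_exponent_eq : (p - 4) / (2 * (p - 2)) * ((p - 2) / 2) = (p - 4) / 4 := by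
    field_simp
    norm_num
  refine (ENNReal.rpow_le_rpow (lintegral_rpow_lintegral_Gr_sq_le ht hx (by positivity) hq2)
    (by positivity)).trans_eq ?_
  rw [exponent_eq, ENNReal.ofReal_rpow_of_nonneg (by positivity) (by positivity),
    div_eq_mul_inv (T ^ _), inv_div, mul_rpow (by positivity) (by positivity),
    mul_rpow (by positivity) (by positivity), ← rpow_mul (by positivity), ← rpow_mul hT,
    K_exponent_eq, T_exponent_eq, growthConst]
  congr 1
  ring

/-! ### The weighted sup norm as a function of time -/

section CrNorm

variable {r s t T p : ℝ} {u : ℝ → ℝ → ℝ}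

theorem CrBdd.mono (hu : CrBdd r t u) (hst : s ≤ t) : CrBdd r s u :=
  BddAbove.mono (image_mono (prod_mono_left (Icc_subset_Icc_right hst))) hu

theorem CrBdd.le_CrNorm (hu : CrBdd r t u) (hs : s ∈ Icc 0 t) {y : ℝ} (hy : 0 ≤ y) :
    exp (-r * y) * |u s y| ≤ CrNorm r t u :=
  le_csSup hu ⟨(s, y), ⟨hs, hy⟩, rfl⟩

theorem CrNorm_nonneg (r t : ℝ) (u : ℝ → ℝ → ℝ) : 0 ≤ CrNorm r t u := by
  apply Real.sSup_nonneg
  rintro _ ⟨q, -, rfl⟩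
  positivity

theorem CrBdd.monotoneOn_CrNorm (hu : CrBdd r T u) :
    MonotoneOn (fun t => CrNorm r t u) (Iic T) := by
  refine fun s _ t ht hst => Real.sSup_le ?_ (CrNorm_nonneg r t u)
  rintro _ ⟨⟨s', y⟩, ⟨hs', hy⟩, rfl⟩
  exact (hu.mono ht).le_CrNorm ⟨hs'.1, hs'.2.trans hst⟩ hy

theorem CrBdd.aemeasurable_CrNorm (hu : CrBdd r T u) :
    AEMeasurable (fun t => CrNorm r t u) (volume.restrict (Ioc 0 T)) :=
  aemeasurable_restrict_of_monotoneOn measurableSet_Ioc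
    (hu.monotoneOn_CrNorm.mono fun _ ht => ht.2)

theorem CrBdd.integrableOn_rpow_one_add_CrNorm (hu : CrBdd r T u) (hp : 0 ≤ p) :
    IntegrableOn (fun t => (1 + CrNorm r t u) ^ p) (Ioc 0 T) := by
  have hmono : MonotoneOn (fun t => (1 + CrNorm r t u) ^ p) (Icc 0 T) := fun s hs t ht hst =>
    rpow_le_rpow (add_nonneg zero_le_one (CrNorm_nonneg r s u))
      (add_le_add_right (hu.monotoneOn_CrNorm hs.2 ht.2 hst) 1) hp
  exact (hmono.integrableOn_isCompact isCompact_Icc).mono_set Ioc_subset_Icc_self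

theorem CrBdd.lintegral_rpow_one_add_CrNorm (hu : CrBdd r T u) (hp : 0 ≤ p) {R : ℝ}
    (hR : 0 ≤ R) :
    ∫⁻ t in Ioc 0 T, ENNReal.ofReal (R * (1 + CrNorm r t u)) ^ p =
      ENNReal.ofReal (R ^ p * ∫ t in Ioc 0 T, (1 + CrNorm r t u) ^ p) := by
  have hnonneg (t : ℝ) : 0 ≤ 1 + CrNorm r t u := add_nonneg zero_le_one (CrNorm_nonneg r t u)
  rw [← integral_const_mul, ofReal_integral_eq_lintegral_ofReal
    ((hu.integrableOn_rpow_one_add_CrNorm hp).const_mul _)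
    (Eventually.of_forall fun t => mul_nonneg (rpow_nonneg hR p) (rpow_nonneg (hnonneg t) p))]
  simp only [ENNReal.ofReal_rpow_of_nonneg (mul_nonneg hR (hnonneg _)) hp,
    mul_rpow hR (hnonneg _)]

end CrNorm

/-! ### The convolution integrand -/

/-- The integrand `(s, y) ↦ G(t-s,x,y) σ(y,u(s,y)) ġ(s,y)` of the diffusion convolution term at the
point `(t, x)`. -/
noncomputable def convIntegrand (σ g u : ℝ → ℝ → ℝ) (t x s y : ℝ) : ℝ :=
  G (t - s) x y * σ y (u s y) * g s y

section Convolution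

variable {r T p R N t x : ℝ} {σ g u : ℝ → ℝ → ℝ}

theorem volume_restrict_prod {α β : Type*} [MeasureSpace α] [MeasureSpace β]
    [SFinite (volume : Measure α)] [SFinite (volume : Measure β)] (A : Set α) (B : Set β) :
    (volume : Measure (α × β)).restrict (A ×ˢ B) =
      (volume.restrict A).prod (volume.restrict B) := by
  rw [Measure.volume_eq_prod, Measure.prod_restrict]

theorem abs_le_exp_mul_one_add_CrNorm (hR : 0 ≤ R)
    (hσ : ∀ x ≥ (0 : ℝ), ∀ v : ℝ, |σ x v| ≤ R * (exp (r * x) + |v|)) {s y : ℝ}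
    (hu : CrBdd r s u) (hs : 0 ≤ s) (hy : 0 ≤ y) :
    |σ y (u s y)| ≤ exp (r * y) * (R * (1 + CrNorm r s u)) :=
  calc |σ y (u s y)| ≤ R * (exp (r * y) + |u s y|) := hσ y hy _
    _ = exp (r * y) * (R * (1 + exp (-r * y) * |u s y|)) := by
        have exp_mul_exp_neg : exp (r * y) * exp (-r * y) = 1 := by rw [← exp_add]; simp
        linear_combination (-R * |u s y|) * exp_mul_exp_neg
    _ ≤ _ := by
        gcongr
        exact hu.le_CrNorm ⟨hs, le_rfl⟩ hy

theorem exp_mul_enorm_convIntegrand_le (hR : 0 ≤ R)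
    (hσ : ∀ x ≥ (0 : ℝ), ∀ v : ℝ, |σ x v| ≤ R * (exp (r * x) + |v|)) {s y : ℝ}
    (hu : CrBdd r s u) (hs : 0 ≤ s) (hy : 0 ≤ y) :
    ENNReal.ofReal (exp (-r * x)) * ‖convIntegrand σ g u t x s y‖ₑ ≤
      ‖Gr r (t - s) x y‖ₑ * ENNReal.ofReal (R * (1 + CrNorm r s u)) * ‖g s y‖ₑ := by
  have habs : exp (-r * x) * |convIntegrand σ g u t x s y| ≤
      |Gr r (t - s) x y| * (R * (1 + CrNorm r s u)) * |g s y| := by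
    calc exp (-r * x) * |convIntegrand σ g u t x s y|
        = exp (-r * x) * |G (t - s) x y| * |σ y (u s y)| * |g s y| := by
          rw [convIntegrand, abs_mul, abs_mul]
          ring
      _ ≤ exp (-r * x) * |G (t - s) x y| * (exp (r * y) * (R * (1 + CrNorm r s u))) *
            |g s y| := by
          gcongr
          exact abs_le_exp_mul_one_add_CrNorm hR hσ hu hs hy
      _ = _ := by
          rw [Gr, abs_mul, abs_exp, show -r * (x - y) = -r * x + r * y by ring, exp_add]
          ring
  have := CrNorm_nonneg r s u
  simp only [Real.enorm_eq_ofReal_abs]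
  rw [← ENNReal.ofReal_mul (by positivity), ← ENNReal.ofReal_mul (by positivity),
    ← ENNReal.ofReal_mul (by positivity)]
  exact ENNReal.ofReal_le_ofReal habs

theorem aemeasurable_convIntegrand {μ : Measure (ℝ × ℝ)} (hσm : Measurable (Function.uncurry σ))
    (hg : AEMeasurable (Function.uncurry g) μ) (hum : AEMeasurable (Function.uncurry u) μ) :
    AEMeasurable (Function.uncurry (convIntegrand σ g u t x)) μ := by
  have hG : Measurable fun q : ℝ × ℝ => G (t - q.1) x q.2 := by
    unfold G
    fun_prop
  exact (hG.aemeasurable.mul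
    (hσm.comp_aemeasurable (measurable_snd.aemeasurable.prodMk hum))).mul hg

theorem exp_mul_lintegral_convIntegrand_le (hR : 0 ≤ R)
    (hσ : ∀ x ≥ (0 : ℝ), ∀ v : ℝ, |σ x v| ≤ R * (exp (r * x) + |v|)) (hu : CrBdd r t u) :
    ENNReal.ofReal (exp (-r * x)) *
        ∫⁻ q in Ioc 0 t ×ˢ Ioi 0, ‖convIntegrand σ g u t x q.1 q.2‖ₑ ≤
      ∫⁻ q in Ioc 0 t ×ˢ Ioi 0, ‖Gr r (t - q.1) x q.2‖ₑ *
        ENNReal.ofReal (R * (1 + CrNorm r q.1 u)) * ‖g q.1 q.2‖ₑ := by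
  rw [← lintegral_const_mul' _ _ ENNReal.ofReal_ne_top]
  refine setLIntegral_mono' (measurableSet_Ioc.prod measurableSet_Ioi) fun q hq => ?_
  exact exp_mul_enorm_convIntegrand_le hR hσ (hu.mono hq.1.2) hq.1.1.le (le_of_lt hq.2)

theorem rpow_lintegral_convIntegrand_le (hp : 4 < p) (hR : 0 ≤ R) (hN : 0 ≤ N)
    (hσ : ∀ x ≥ (0 : ℝ), ∀ v : ℝ, |σ x v| ≤ R * (exp (r * x) + |v|))
    (hg : AEMeasurable (Function.uncurry g) (volume.restrict (Ioc 0 T ×ˢ Ioi 0)))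
    (hgi : IntegrableOn (fun q : ℝ × ℝ => g q.1 q.2 ^ 2) (Ioc 0 T ×ˢ Ioi 0))
    (hgN : ∫ q in Ioc (0 : ℝ) T ×ˢ Ioi (0 : ℝ), g q.1 q.2 ^ 2 ≤ N ^ 2)
    (hu : CrBdd r T u) (ht : t ∈ Icc 0 T) (hx : 0 ≤ x) :
    (ENNReal.ofReal (exp (-r * x)) *
        ∫⁻ q in Ioc 0 t ×ˢ Ioi 0, ‖convIntegrand σ g u t x q.1 q.2‖ₑ) ^ p ≤
      ENNReal.ofReal (growthConst r T p * R ^ p * N ^ p * T ^ ((p - 4) / 4) *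
        ∫ t' in Ioc 0 T, (1 + CrNorm r t' u) ^ p) := by
  have hT : 0 ≤ T := ht.1.trans ht.2
  have hC := (growthConst_pos r T hp).le
  have hsub : Ioc 0 t ×ˢ Ioi (0 : ℝ) ⊆ Ioc 0 T ×ˢ Ioi 0 :=
    prod_mono_left (Ioc_subset_Ioc_right ht.2)
  have hk : Measurable fun q : ℝ × ℝ => ‖Gr r (t - q.1) x q.2‖ₑ :=
    ((measurable_Gr r x).comp (by fun_prop : Measurable fun q : ℝ × ℝ => (t - q.1, q.2))).enorm
  have hb : AEMeasurable (fun s => ENNReal.ofReal (R * (1 + CrNorm r s u)))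
      (volume.restrict (Ioc 0 t)) :=
    (((hu.mono ht.2).aemeasurable_CrNorm.const_add 1).const_mul R).ennreal_ofReal
  have hγ : AEMeasurable (fun q : ℝ × ℝ => ‖g q.1 q.2‖ₑ)
      ((volume.restrict (Ioc 0 t)).prod (volume.restrict (Ioi 0))) := by
    rw [← volume_restrict_prod]
    exact (hg.mono_set hsub).enorm
  have holder := rpow_lintegral_prod_mul_le (p := p) (by linarith) hk.aemeasurable hb hγ
  rw [← volume_restrict_prod] at holder
  calc _ ≤ (∫⁻ q in Ioc 0 t ×ˢ Ioi 0, ‖Gr r (t - q.1) x q.2‖ₑ *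
          ENNReal.ofReal (R * (1 + CrNorm r q.1 u)) * ‖g q.1 q.2‖ₑ) ^ p :=
        ENNReal.rpow_le_rpow (exp_mul_lintegral_convIntegrand_le hR hσ (hu.mono ht.2))
          (by linarith)
    _ ≤ ENNReal.ofReal (growthConst r T p * T ^ ((p - 4) / 4)) *
          ENNReal.ofReal (R ^ p * ∫ t' in Ioc 0 T, (1 + CrNorm r t' u) ^ p) *
          ENNReal.ofReal (N ^ p) := by
        refine holder.trans ?_
        gcongr
        · exact rpow_lintegral_rpow_lintegral_Gr_sq_le hp ht hx
        · rw [← hu.lintegral_rpow_one_add_CrNorm (by linarith) hR]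
          exact lintegral_mono_set (Ioc_subset_Ioc_right ht.2)
        · exact (ENNReal.rpow_le_rpow (lintegral_mono_set hsub) (by linarith)).trans
            (rpow_lintegral_enorm_sq_le (by linarith) hN hgi hgN)
    _ = _ := by
        rw [← ENNReal.ofReal_mul (by positivity), ← ENNReal.ofReal_mul' (by positivity)]
        congr 1
        ring

end Convolution

/-! ### The growth estimate -/

theorem stmt_18_general {r T p R N t x : ℝ} {σ g u : ℝ → ℝ → ℝ} (hp : 4 < p) (hR : 0 ≤ R)
    (hN : 0 ≤ N) (hσm : Measurable (Function.uncurry σ))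
    (hσ : ∀ x ≥ (0 : ℝ), ∀ v : ℝ, |σ x v| ≤ R * (exp (r * x) + |v|))
    (hg : AEMeasurable (Function.uncurry g) (volume.restrict (Ioc 0 T ×ˢ Ioi 0)))
    (hgi : IntegrableOn (fun q : ℝ × ℝ => g q.1 q.2 ^ 2) (Ioc 0 T ×ˢ Ioi 0))
    (hgN : ∫ q in Ioc (0 : ℝ) T ×ˢ Ioi (0 : ℝ), g q.1 q.2 ^ 2 ≤ N ^ 2)
    (hum : AEMeasurable (Function.uncurry u) (volume.restrict (Ioc 0 T ×ˢ Ioi 0)))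
    (hu : CrBdd r T u) (ht : t ∈ Icc 0 T) (hx : 0 ≤ x) :
    IntegrableOn (Function.uncurry (convIntegrand σ g u t x)) (Ioc 0 t ×ˢ Ioi 0) ∧
      (exp (-r * x) * |∫ s in Ioc 0 t, ∫ y in Ioi 0, convIntegrand σ g u t x s y|) ^ p ≤
        growthConst r T p * R ^ p * N ^ p * T ^ ((p - 4) / 4) *
          ∫ t' in Ioc 0 T, (1 + CrNorm r t' u) ^ p := by
  have hp0 : 0 < p := by linarith
  have hT : 0 ≤ T := ht.1.trans ht.2
  have hC := (growthConst_pos r T hp).le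
  have bound := rpow_lintegral_convIntegrand_le hp hR hN hσ hg hgi hgN hu ht hx
  have hsub : Ioc 0 t ×ˢ Ioi (0 : ℝ) ⊆ Ioc 0 T ×ˢ Ioi 0 :=
    prod_mono_left (Ioc_subset_Ioc_right ht.2)
  have hint : IntegrableOn (Function.uncurry (convIntegrand σ g u t x)) (Ioc 0 t ×ˢ Ioi 0) := by
    refine ⟨(aemeasurable_convIntegrand hσm (hg.mono_set hsub)
      (hum.mono_set hsub)).aestronglyMeasurable, ?_⟩
    have hfin := (ENNReal.rpow_lt_top_iff_of_pos hp0).1 (bound.trans_lt ENNReal.ofReal_lt_top)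
    exact ENNReal.lt_top_of_mul_ne_top_right hfin.ne (by simp [exp_pos])
  refine ⟨hint, ?_⟩
  have fubini : ∫ s in Ioc 0 t, ∫ y in Ioi 0, convIntegrand σ g u t x s y =
      ∫ q in Ioc 0 t ×ˢ Ioi 0, convIntegrand σ g u t x q.1 q.2 :=
    (setIntegral_prod (Function.uncurry (convIntegrand σ g u t x)) hint).symm
  have hS : 0 ≤ ∫ t' in Ioc 0 T, (1 + CrNorm r t' u) ^ p :=
    integral_nonneg fun t' => rpow_nonneg (add_nonneg zero_le_one (CrNorm_nonneg r t' u)) p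
  rw [← ENNReal.ofReal_le_ofReal_iff (by positivity), fubini,
    ← ENNReal.ofReal_rpow_of_nonneg (by positivity) hp0.le, ENNReal.ofReal_mul (exp_pos _).le,
    ← Real.enorm_eq_ofReal_abs]
  refine le_trans ?_ bound
  gcongr
  exact enorm_integral_le_lintegral_enorm _

/-- as in (5.7) of the paper: growth estimate for the diffusion convolution
term against an `L²` control `ġ`. -/
theorem stmt_18 (r T p : ℝ) (hT : 0 < T) (hp : 4 < p) :
    ∃ C > (0:ℝ), ∀ R N : ℝ, 0 < R → 1 ≤ N →
      ∀ σ : ℝ → ℝ → ℝ,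
        Measurable (Function.uncurry σ) →
        (∀ x ≥ (0:ℝ), ∀ u : ℝ, |σ x u| ≤ R * (Real.exp (r * x) + |u|)) →
      ∀ g : ℝ → ℝ → ℝ,
        Measurable (Function.uncurry g) →
        IntegrableOn (fun q : ℝ × ℝ => (g q.1 q.2) ^ 2) (Ioc 0 T ×ˢ Ioi 0) →
        (∫ q in (Ioc (0:ℝ) T ×ˢ Ioi (0:ℝ)), (g q.1 q.2) ^ 2) ≤ N ^ 2 →
      ∀ u : ℝ → ℝ → ℝ,
        ContinuousOn (Function.uncurry u) (Icc 0 T ×ˢ Ici 0) → CrBdd r T u →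
        ∀ t ∈ Icc (0:ℝ) T, ∀ x ≥ (0:ℝ),
          (Real.exp (-r * x) *
              |∫ s in Ioc (0:ℝ) t, ∫ y in Ioi (0:ℝ), G (t - s) x y * σ y (u s y) * g s y|) ^ p
            ≤ C * R ^ p * N ^ p * T ^ ((p - 4) / 4) *
                ∫ t' in Ioc (0:ℝ) T, (1 + CrNorm r t' u) ^ p :=
  ⟨growthConst r T p, growthConst_pos r T hp,
    fun _ _ hR hN _ hσm hσ _ hg hgi hgN _ hum hu _ ht _ hx =>
    (stmt_18_general hp hR.le (zero_le_one.trans hN) hσm hσ hg.aemeasurable hgi hgN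
      ((hum.mono (prod_mono Ioc_subset_Icc_self Ioi_subset_Ici_self)).aemeasurable
        (measurableSet_Ioc.prod measurableSet_Ioi)) hu ht hx).2⟩
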